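/- arXiv:0709.2466 — 2 statements merged into one kernel-verified Lean document; each statement's English description precedes it below -/
import Mathlib

section
/- Let A be an n×n quaternion matrix with A² = A. Then A is unitarily similar to a direct sum of matrices, each of which is one of: the 2×2 matrix [[1, b],[0, 0]] with b a positive real number, the 1×1 matrix [1], or the 1×1 matrix [0]; moreover this direct sum is uniquely determined by A up to permutation of the summands. -/
open Matrix
open scoped Quaternion

noncomputable section

/-- A quaternion matrix `U` is unitary if `Uᴴ * U = 1`. -/
def IsUnitaryM {m : Type*} [Fintype m] [DecidableEq m] (U : Matrix m m ℍ[ℝ]) : Prop :=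
  Uᴴ * U = 1

/-- `A` and `B` are unitarily similar if `A = Uᴴ * B * U` for some unitary `U`. -/
def UnitarilySimilar {m : Type*} [Fintype m] [DecidableEq m] (A B : Matrix m m ℍ[ℝ]) : Prop :=
  ∃ U : Matrix m m ℍ[ℝ], IsUnitaryM U ∧ A = Uᴴ * B * U

/-- The direct sum of `p` blocks `[[1, b t],[0, 0]]`, `q` blocks `[1]`, and `r` blocks
`[0]`. -/
def projCanon (p q r : ℕ) (b : Fin p → ℝ) :
    Matrix ((Fin 2 × Fin p) ⊕ (Fin q ⊕ Fin r)) ((Fin 2 × Fin p) ⊕ (Fin q ⊕ Fin r)) ℍ[ℝ] :=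
  Matrix.fromBlocks (Matrix.blockDiagonal fun t => !![1, (b t : ℍ[ℝ]); 0, 0]) 0 0
    (Matrix.fromBlocks 1 0 0 0)

/-!
Since `A² = A`, an eigenvector `x` of `A Aᴴ` with nonzero eigenvalue `c` satisfies `A x = x`, and
`z = Aᴴ x - x` is orthogonal to `x` with `‖z‖² = c - 1` for unit `x`; hence `c = 1 + b²` for some
`b ≥ 0`. For `b > 0` the vectors `x` and `y = b⁻¹ z` span a block `[[1, b], [0, 0]]`, for `b = 0`
both `A` and `Aᴴ` fix `x`, and `Aᴴ` kills the eigenvectors of eigenvalue `0`. So an orthonormal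
eigenbasis of `A Aᴴ` yields an orthonormal family on which `A` acts by the nonzero blocks and whose
span contains the range of `Aᴴ`; hence `A` vanishes on its orthogonal complement.

Conversely, `A Aᴴ` determines the summands: its eigenvalues are `1 + b²` and `0` for each
`2 × 2` block, `1` for each `[1]` and `0` for each `[0]`. Eigenvalue multiplicities are compared
through the real part of the trace, as the trace itself is not a similarity invariant over `ℍ`.
-/

section General

theorem card_le_card_of_mul_eq_one {R m ι : Type*} [Semiring R] [RankCondition R] [Fintype m]
    [Fintype ι] [DecidableEq ι] {B : Matrix ι m R} {X : Matrix m ι R} (h : B * X = 1) :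
    Fintype.card ι ≤ Fintype.card m :=
  card_le_of_surjective R X.vecMulLinear fun w =>
    ⟨w ᵥ* B, by rw [vecMulLinear_apply, vecMul_vecMul, h, vecMul_one]⟩

theorem exists_equiv_of_sum_comp_eq {ι κ α : Type*} [Fintype ι] [Fintype κ] {b : ι → α}
    {c : κ → α} (h : ∀ f : α → ℝ, ∑ i, f (b i) = ∑ j, f (c j)) :
    ∃ σ : ι ≃ κ, ∀ i, b i = c (σ i) := by
  classical
  have fiberEquiv : ∀ a, Nonempty ({i // b i = a} ≃ {j // c j = a}) := fun a => by
    rw [← Fintype.card_eq, Fintype.card_subtype, Fintype.card_subtype]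
    simpa only [Finset.sum_boole, Nat.cast_inj] using h fun x => if x = a then 1 else 0
  exact ⟨Equiv.ofFiberEquiv fun a => (fiberEquiv a).some,
    fun i => (Equiv.ofFiberEquiv_map _ i).symm⟩

variable {R m ι κ ν : Type*} [Ring R] [StarRing R] [Fintype m]

theorem conjTranspose_mul_eq_zero_comm {X : Matrix m ι R} {Y : Matrix m κ R} :
    Xᴴ * Y = 0 ↔ Yᴴ * X = 0 := by
  rw [← conjTranspose_eq_zero, conjTranspose_mul, conjTranspose_conjTranspose]

theorem fromCols_conjTranspose_mul_eq_zero_iff {X : Matrix m ι R} {Y : Matrix m κ R}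
    {Z : Matrix m ν R} : (fromCols X Y)ᴴ * Z = 0 ↔ Xᴴ * Z = 0 ∧ Yᴴ * Z = 0 := by
  rw [conjTranspose_fromCols_eq_fromRows_conjTranspose, fromRows_mul, ← fromRows_zero,
    fromRows_ext_iff]

theorem fromCols_conjTranspose_mul_self_eq_one_iff [DecidableEq ι] [DecidableEq κ]
    {X : Matrix m ι R} {Y : Matrix m κ R} :
    (fromCols X Y)ᴴ * fromCols X Y = 1 ↔ Xᴴ * X = 1 ∧ Yᴴ * Y = 1 ∧ Xᴴ * Y = 0 := by
  rw [conjTranspose_fromCols_eq_fromRows_conjTranspose, fromRows_mul_fromCols, ← fromBlocks_one,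
    fromBlocks_inj, conjTranspose_mul_eq_zero_comm (X := Y)]
  tauto

end General

section RealDiagonal

variable {m ι κ : Type*} [DecidableEq ι] [DecidableEq κ]

/-- The quaternion diagonal matrix with the real entries `d`. -/
def realDiagonal (d : ι → ℝ) : Matrix ι ι ℍ[ℝ] :=
  diagonal fun i => (d i : ℍ[ℝ])

theorem realDiagonal_zero : realDiagonal (0 : ι → ℝ) = 0 := by
  simp [realDiagonal]

theorem realDiagonal_one : realDiagonal (1 : ι → ℝ) = 1 := by
  simp [realDiagonal]

theorem realDiagonal_add (d c : ι → ℝ) :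
    realDiagonal (d + c) = realDiagonal d + realDiagonal c := by
  simp [realDiagonal]

theorem realDiagonal_sub (d c : ι → ℝ) :
    realDiagonal (d - c) = realDiagonal d - realDiagonal c := by
  simp [realDiagonal]

theorem realDiagonal_conjTranspose (d : ι → ℝ) : (realDiagonal d)ᴴ = realDiagonal d := by
  simp [realDiagonal, diagonal_conjTranspose, Pi.star_def]

theorem realDiagonal_mul_realDiagonal [Fintype ι] (d c : ι → ℝ) :
    realDiagonal d * realDiagonal c = realDiagonal (d * c) := by
  simp [realDiagonal]

theorem realDiagonal_submatrix (d : ι → ℝ) {f : κ → ι} (hf : f.Injective) :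
    (realDiagonal d).submatrix f f = realDiagonal (d ∘ f) :=
  submatrix_diagonal _ f hf

theorem fromBlocks_realDiagonal (d : ι → ℝ) (c : κ → ℝ) :
    fromBlocks (realDiagonal d) 0 0 (realDiagonal c) = realDiagonal (Sum.elim d c) := by
  rw [realDiagonal, realDiagonal, fromBlocks_diagonal, realDiagonal]
  congr 1
  ext1 (_ | _) <;> rfl

theorem mul_realDiagonal_apply [Fintype ι] (M : Matrix m ι ℍ[ℝ]) (d : ι → ℝ) (i : m) (j : ι) :
    (M * realDiagonal d) i j = d j • M i j := by
  rw [realDiagonal, mul_diagonal, Quaternion.mul_coe_eq_smul]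

theorem realDiagonal_mul_apply [Fintype ι] (d : ι → ℝ) (M : Matrix ι m ℍ[ℝ]) (i : ι) (j : m) :
    (realDiagonal d * M) i j = d i • M i j := by
  rw [realDiagonal, diagonal_mul, Quaternion.coe_mul_eq_smul]

theorem mul_realDiagonal_inv_cancel_right [Fintype ι] (M : Matrix m ι ℍ[ℝ]) {d : ι → ℝ}
    (hd : ∀ i, d i ≠ 0) : M * realDiagonal d⁻¹ * realDiagonal d = M := by
  ext1 i j
  rw [mul_realDiagonal_apply, mul_realDiagonal_apply, Pi.inv_apply, smul_inv_smul₀ (hd j)]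

theorem mul_realDiagonal_comp_eq [Fintype ι] [Fintype κ] {V : Matrix κ ι ℍ[ℝ]} {d : ι → ℝ}
    {c : κ → ℝ} (h : V * realDiagonal d = realDiagonal c * V) (f : ℝ → ℝ) :
    V * realDiagonal (f ∘ d) = realDiagonal (f ∘ c) * V := by
  ext1 i j
  have entry : d j • V i j = c i • V i j := by
    rw [← mul_realDiagonal_apply, h, realDiagonal_mul_apply]
  rw [mul_realDiagonal_apply, realDiagonal_mul_apply, Function.comp_apply, Function.comp_apply]
  by_cases hdc : d j = c i
  · rw [hdc]
  · have hV : V i j = 0 := by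
      rw [← sub_eq_zero, ← sub_smul] at entry
      exact (smul_eq_zero.mp entry).resolve_left (sub_ne_zero.mpr hdc)
    rw [hV, smul_zero, smul_zero]

end RealDiagonal

section Gram

variable {m ι : Type*} [Fintype m]

theorem conjTranspose_mul_self_apply_self (X : Matrix m ι ℍ[ℝ]) (i : ι) :
    (Xᴴ * X) i i = ((∑ j, ‖X j i‖ ^ 2 : ℝ) : ℍ[ℝ]) := by
  simp only [mul_apply, conjTranspose_apply, Quaternion.star_mul_self,
    Quaternion.normSq_eq_norm_mul_self, ← sq]
  exact (map_sum (algebraMap ℝ ℍ[ℝ]) _ _).symm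

theorem eq_zero_of_conjTranspose_mul_self_eq_zero {X : Matrix m ι ℍ[ℝ]} (h : Xᴴ * X = 0) :
    X = 0 := by
  ext1 j i
  have hsum : ∑ j, ‖X j i‖ ^ 2 = 0 := by
    rw [← Quaternion.coe_inj, ← conjTranspose_mul_self_apply_self, h]
    rfl
  rw [Finset.sum_eq_zero_iff_of_nonneg fun _ _ => sq_nonneg _] at hsum
  exact norm_eq_zero.mp (pow_eq_zero_iff two_ne_zero |>.mp (hsum j (Finset.mem_univ j)))

theorem nonneg_of_conjTranspose_mul_self_eq_realDiagonal [DecidableEq ι] {X : Matrix m ι ℍ[ℝ]}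
    {d : ι → ℝ} (h : Xᴴ * X = realDiagonal d) (i : ι) : 0 ≤ d i := by
  have hdi : d i = ∑ j, ‖X j i‖ ^ 2 := by
    rw [← Quaternion.coe_inj, ← conjTranspose_mul_self_apply_self, h, realDiagonal,
      diagonal_apply_eq]
  rw [hdi]
  positivity

end Gram

section RealPart

variable {m ι : Type*} [Fintype m] [Fintype ι]

theorem quaternion_re_mul_comm (a b : ℍ[ℝ]) : (a * b).re = (b * a).re := by
  simp only [Quaternion.re_mul]
  ring

theorem quaternion_re_sum (f : ι → ℍ[ℝ]) : (∑ i, f i).re = ∑ i, (f i).re :=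
  map_sum (⟨⟨fun a => a.re, rfl⟩, fun _ _ => rfl⟩ : ℍ[ℝ] →+ ℝ) f Finset.univ

theorem quaternion_re_trace_mul_comm (M : Matrix m ι ℍ[ℝ]) (N : Matrix ι m ℍ[ℝ]) :
    (M * N).trace.re = (N * M).trace.re := by
  simp only [trace, diag_apply, mul_apply, quaternion_re_sum]
  rw [Finset.sum_comm]
  simp only [quaternion_re_mul_comm]

theorem re_trace_realDiagonal [DecidableEq ι] (d : ι → ℝ) :
    (realDiagonal d).trace.re = ∑ i, d i := by
  simp only [realDiagonal, trace_diagonal, quaternion_re_sum, Quaternion.re_coe]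

end RealPart

section Spectral

theorem exists_unit_eigenvector_mem_of_invariant {𝕜 E : Type*} [RCLike 𝕜] [NormedAddCommGroup E]
    [InnerProductSpace 𝕜 E] [FiniteDimensional 𝕜 E] {T : E →ₗ[𝕜] E} (hT : T.IsSymmetric)
    {K : Submodule 𝕜 E} (hK : K ≠ ⊥) (invariant : ∀ v ∈ K, T v ∈ K) :
    ∃ v ∈ K, ‖v‖ = 1 ∧ ∃ c : ℝ, T v = (c : 𝕜) • v := by
  have hTK := hT.restrict_invariant invariant
  have finrank_pos : 0 < Module.finrank 𝕜 K := Submodule.one_le_finrank_iff.mpr hK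
  exact ⟨hTK.eigenvectorBasis rfl ⟨0, finrank_pos⟩, Subtype.property _,
    (hTK.eigenvectorBasis rfl).norm_eq_one _, hTK.eigenvalues rfl ⟨0, finrank_pos⟩,
    congrArg Subtype.val (hTK.apply_eigenvectorBasis rfl _)⟩

variable {m ι κ : Type*} [Fintype m] [Fintype ι] [Fintype κ]

/-- Left multiplication by a quaternion matrix as a real linear map of Euclidean spaces; only the
real structure is recorded, so that the real spectral theorem applies. -/
def mulVecEuclidean (M : Matrix m ι ℍ[ℝ]) :
    PiLp 2 (fun _ : ι => ℍ[ℝ]) →ₗ[ℝ] PiLp 2 (fun _ : m => ℍ[ℝ]) where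
  toFun v := WithLp.toLp 2 (M *ᵥ v.ofLp)
  map_add' v w := by rw [WithLp.ofLp_add, mulVec_add, WithLp.toLp_add]
  map_smul' c v := by rw [WithLp.ofLp_smul, mulVec_smul, WithLp.toLp_smul, RingHom.id_apply]

theorem finrank_quaternion_euclidean :
    Module.finrank ℝ (PiLp 2 (fun _ : ι => ℍ[ℝ])) = Fintype.card ι * 4 := by
  rw [LinearEquiv.finrank_eq (WithLp.linearEquiv 2 ℝ (ι → ℍ[ℝ])), Module.finrank_pi_fintype]
  simp only [Quaternion.finrank_eq_four, Finset.sum_const, Finset.card_univ, smul_eq_mul]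

omit [Fintype m] in
theorem mem_ker_mulVecEuclidean {M : Matrix m ι ℍ[ℝ]} {v : PiLp 2 (fun _ : ι => ℍ[ℝ])} :
    v ∈ (mulVecEuclidean M).ker ↔ M *ᵥ v.ofLp = 0 :=
  LinearMap.mem_ker.trans (WithLp.toLp_eq_zero 2)

theorem inner_eq_re_star_dotProduct (v w : PiLp 2 (fun _ : m => ℍ[ℝ])) :
    inner ℝ v w = (star w.ofLp ⬝ᵥ v.ofLp).re := by
  simp only [PiLp.inner_apply, Quaternion.inner_def, dotProduct, Pi.star_apply, quaternion_re_sum,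
    quaternion_re_mul_comm (star _)]

theorem isSymmetric_mulVecEuclidean {H : Matrix m m ℍ[ℝ]} (hH : H.IsHermitian) :
    (mulVecEuclidean H).IsSymmetric := fun v w => by
  rw [inner_eq_re_star_dotProduct, inner_eq_re_star_dotProduct]
  change (star w.ofLp ⬝ᵥ (H *ᵥ v.ofLp)).re = (star (H *ᵥ w.ofLp) ⬝ᵥ v.ofLp).re
  rw [star_mulVec, hH.eq, dotProduct_mulVec]

/-- The columns of `X` are orthonormal eigenvectors of `H`, with real eigenvalues `d`. Columns are
multiplied by scalars on the right, but real eigenvalues make the side immaterial. -/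
structure IsEigenframe [DecidableEq ι] (H : Matrix m m ℍ[ℝ]) (X : Matrix m ι ℍ[ℝ]) (d : ι → ℝ) :
    Prop where
  orthonormal : Xᴴ * X = 1
  mul_eq : H * X = X * realDiagonal d

theorem IsEigenframe.submatrix [DecidableEq ι] [DecidableEq κ] {H : Matrix m m ℍ[ℝ]}
    {X : Matrix m ι ℍ[ℝ]} {d : ι → ℝ} (h : IsEigenframe H X d) {f : κ → ι} (hf : f.Injective) :
    IsEigenframe H (X.submatrix id f) (d ∘ f) where
  orthonormal := by
    rw [conjTranspose_submatrix, ← submatrix_mul _ _ _ _ _ Function.bijective_id, h.orthonormal,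
      submatrix_one f hf]
  mul_eq := by
    ext1 i j
    rw [mul_realDiagonal_apply, submatrix_apply, Function.comp_apply, ← mul_realDiagonal_apply,
      id_eq, ← h.mul_eq]
    rfl

theorem isEigenframe_fromCols_iff [DecidableEq ι] [DecidableEq κ] {H : Matrix m m ℍ[ℝ]}
    {X : Matrix m ι ℍ[ℝ]} {Y : Matrix m κ ℍ[ℝ]} {d : ι → ℝ} {c : κ → ℝ} :
    IsEigenframe H (fromCols X Y) (Sum.elim d c) ↔
      IsEigenframe H X d ∧ IsEigenframe H Y c ∧ Xᴴ * Y = 0 := by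
  have mul_eq_iff : H * fromCols X Y = fromCols X Y * realDiagonal (Sum.elim d c) ↔
      H * X = X * realDiagonal d ∧ H * Y = Y * realDiagonal c := by
    rw [mul_fromCols, ← fromBlocks_realDiagonal, fromCols_mul_fromBlocks, Matrix.mul_zero,
      Matrix.mul_zero, add_zero, zero_add, fromCols_ext_iff]
  constructor
  · rintro ⟨ho, hm⟩
    obtain ⟨hX, hY, hXY⟩ := fromCols_conjTranspose_mul_self_eq_one_iff.mp ho
    obtain ⟨hHX, hHY⟩ := mul_eq_iff.mp hm
    exact ⟨⟨hX, hHX⟩, ⟨hY, hHY⟩, hXY⟩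
  · rintro ⟨hX, hY, hXY⟩
    exact ⟨fromCols_conjTranspose_mul_self_eq_one_iff.mpr ⟨hX.orthonormal, hY.orthonormal, hXY⟩,
      mul_eq_iff.mpr ⟨hX.mul_eq, hY.mul_eq⟩⟩

theorem isEigenframe_replicateCol {H : Matrix m m ℍ[ℝ]} {v : PiLp 2 (fun _ : m => ℍ[ℝ])} {c : ℝ}
    (hv : ‖v‖ = 1) (hH : H *ᵥ v.ofLp = c • v.ofLp) :
    IsEigenframe H (replicateCol (Fin 1) v.ofLp) (fun _ => c) where
  orthonormal := by
    ext1 i j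
    rw [Subsingleton.elim j i, conjTranspose_mul_self_apply_self, one_apply_eq]
    simp only [replicateCol_apply]
    rw [← PiLp.norm_sq_eq_of_L2, hv, one_pow, Quaternion.coe_one]
  mul_eq := by
    ext1 i j
    rw [mul_realDiagonal_apply]
    exact congrFun hH i

-- The vectors orthogonal to the columns of `X` form the kernel of `Xᴴ`, which is nonzero for
-- dimension reasons and invariant under `H`.
theorem exists_isEigenframe_one {H : Matrix m m ℍ[ℝ]} (hH : H.IsHermitian) {X : Matrix m ι ℍ[ℝ]}
    {C : Matrix ι ι ℍ[ℝ]} (hX : H * X = X * C) (hcard : Fintype.card ι < Fintype.card m) :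
    ∃ (v : Matrix m (Fin 1) ℍ[ℝ]) (c : Fin 1 → ℝ), IsEigenframe H v c ∧ Xᴴ * v = 0 := by
  have ker_ne_bot : (mulVecEuclidean Xᴴ).ker ≠ ⊥ := LinearMap.ker_ne_bot_of_finrank_lt (by
    rw [finrank_quaternion_euclidean, finrank_quaternion_euclidean]
    omega)
  have invariant : ∀ v ∈ (mulVecEuclidean Xᴴ).ker,
      mulVecEuclidean H v ∈ (mulVecEuclidean Xᴴ).ker := fun v hv => by
    have hXH : Xᴴ * H = Cᴴ * Xᴴ := by
      rw [← conjTranspose_mul, ← hX, conjTranspose_mul, hH.eq]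
    rw [mem_ker_mulVecEuclidean] at hv ⊢
    change Xᴴ *ᵥ (H *ᵥ v.ofLp) = 0
    rw [mulVec_mulVec, hXH, ← mulVec_mulVec, hv, mulVec_zero]
  obtain ⟨v, hvK, hv, c, hHv⟩ := exists_unit_eigenvector_mem_of_invariant
    (isSymmetric_mulVecEuclidean hH) ker_ne_bot invariant
  refine ⟨_, _, isEigenframe_replicateCol hv (congrArg WithLp.ofLp hHv), ?_⟩
  ext1 i _
  exact congrFun (mem_ker_mulVecEuclidean.mp hvK) i

-- With `X` empty and `k = card m` this is the spectral theorem; with `H = 0` it completes the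
-- columns of an arbitrary `X`.
theorem exists_isEigenframe_orthogonal {H : Matrix m m ℍ[ℝ]} (hH : H.IsHermitian)
    {X : Matrix m ι ℍ[ℝ]} {C : Matrix ι ι ℍ[ℝ]} (hX : H * X = X * C) (k : ℕ)
    (hk : Fintype.card ι + k ≤ Fintype.card m) :
    ∃ (Y : Matrix m (Fin k) ℍ[ℝ]) (d : Fin k → ℝ), IsEigenframe H Y d ∧ Xᴴ * Y = 0 := by
  induction k with
  | zero =>
    exact ⟨0, 0, ⟨Subsingleton.elim _ _, Subsingleton.elim _ _⟩, Subsingleton.elim _ _⟩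
  | succ k ih =>
    obtain ⟨Y, d, hY, hXY⟩ := ih (by omega)
    have invariant :
        H * fromCols X Y = fromCols X Y * fromBlocks C 0 0 (realDiagonal d) := by
      rw [mul_fromCols, fromCols_mul_fromBlocks, hX, hY.mul_eq, Matrix.mul_zero, Matrix.mul_zero,
        add_zero, zero_add]
    obtain ⟨v, c, hv, hXYv⟩ := exists_isEigenframe_one hH invariant (by
      rw [Fintype.card_sum, Fintype.card_fin]
      omega)
    obtain ⟨hXv, hYv⟩ := fromCols_conjTranspose_mul_eq_zero_iff.mp hXYv
    refine ⟨_, _, (isEigenframe_fromCols_iff.mpr ⟨hY, hv, hYv⟩).submatrix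
      finSumFinEquiv.symm.injective, ?_⟩
    have hX' : Xᴴ * fromCols Y v = 0 := by rw [mul_fromCols, hXY, hXv, fromCols_zero]
    ext1 i j
    exact congrFun (congrFun hX' i) (finSumFinEquiv.symm j)

end Spectral

section Idempotent

variable {m ι κ : Type*} [Fintype m] {A : Matrix m m ℍ[ℝ]} {X : Matrix m ι ℍ[ℝ]}
  {Q : Matrix m κ ℍ[ℝ]} {d b : ι → ℝ}

theorem conjTranspose_mul_sub_eq_zero (hQ : A * Q = Q) (X : Matrix m ι ℍ[ℝ]) :
    Qᴴ * (Aᴴ * X - X) = 0 := by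
  rw [Matrix.mul_sub, ← Matrix.mul_assoc, ← conjTranspose_mul, hQ, sub_self]

variable [Fintype ι] [DecidableEq ι]

theorem IsEigenframe.mul_eq_self_of_idempotent (hA : A * A = A) (h : IsEigenframe (A * Aᴴ) X d)
    (hd : ∀ i, d i ≠ 0) : A * X = X := by
  have hXd : A * X * realDiagonal d = X * realDiagonal d := by
    rw [Matrix.mul_assoc, ← h.mul_eq, ← Matrix.mul_assoc, ← Matrix.mul_assoc, hA]
  ext1 i j
  have entry := congrFun (congrFun hXd i) j
  rw [mul_realDiagonal_apply, mul_realDiagonal_apply] at entry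
  exact smul_right_injective _ (hd j) entry

theorem IsEigenframe.mul_sub (h : IsEigenframe (A * Aᴴ) X d) (hX : A * X = X) :
    A * (Aᴴ * X - X) = X * realDiagonal (d - 1) := by
  rw [Matrix.mul_sub, ← Matrix.mul_assoc, h.mul_eq, hX, realDiagonal_sub, realDiagonal_one,
    Matrix.mul_sub, Matrix.mul_one]

theorem IsEigenframe.gram_sub (h : IsEigenframe (A * Aᴴ) X d) (hX : A * X = X) :
    (Aᴴ * X - X)ᴴ * (Aᴴ * X - X) = realDiagonal (d - 1) := by
  calc (Aᴴ * X - X)ᴴ * (Aᴴ * X - X)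
      = Xᴴ * (A * (Aᴴ * X - X)) - Xᴴ * (Aᴴ * X - X) := by
        rw [conjTranspose_sub, conjTranspose_mul, conjTranspose_conjTranspose, Matrix.sub_mul,
          Matrix.mul_assoc]
    _ = realDiagonal (d - 1) := by
        rw [conjTranspose_mul_sub_eq_zero hX, h.mul_sub hX, ← Matrix.mul_assoc, h.orthonormal,
          Matrix.one_mul, sub_zero]

theorem IsEigenframe.eq_zero_or_one_le (hA : A * A = A) (h : IsEigenframe (A * Aᴴ) X d) (i : ι) :
    d i = 0 ∨ 1 ≤ d i := by
  refine or_iff_not_imp_left.mpr fun hi => ?_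
  have h' := h.submatrix (Subtype.val_injective (p := fun i => d i ≠ 0))
  have gram := h'.gram_sub (h'.mul_eq_self_of_idempotent hA fun j => j.2)
  exact sub_nonneg.mp (nonneg_of_conjTranspose_mul_self_eq_realDiagonal gram ⟨i, hi⟩)

theorem IsEigenframe.conjTranspose_mul_eq_zero (h : IsEigenframe (A * Aᴴ) X 0) :
    Aᴴ * X = 0 := by
  refine eq_zero_of_conjTranspose_mul_self_eq_zero ?_
  rw [conjTranspose_mul, conjTranspose_conjTranspose, Matrix.mul_assoc, ← Matrix.mul_assoc A,
    h.mul_eq, realDiagonal_zero, Matrix.mul_zero, Matrix.mul_zero]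

theorem IsEigenframe.conjTranspose_mul_eq_self (hA : A * A = A)
    (h : IsEigenframe (A * Aᴴ) X 1) : Aᴴ * X = X := by
  have hX := h.mul_eq_self_of_idempotent hA fun _ => one_ne_zero
  refine sub_eq_zero.mp (eq_zero_of_conjTranspose_mul_self_eq_zero ?_)
  rw [h.gram_sub hX, sub_self, realDiagonal_zero]

/-- The second basis vectors of the `2 × 2` blocks whose first basis vectors are the columns of
`X`. When `A * Aᴴ` acts on these columns by `1 + b ^ 2`, the columns of `Aᴴ * X - X` have length
`b`, so dividing by `b` normalizes them. -/
def partner (A : Matrix m m ℍ[ℝ]) (X : Matrix m ι ℍ[ℝ]) (b : ι → ℝ) : Matrix m ι ℍ[ℝ] :=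
  (Aᴴ * X - X) * realDiagonal b⁻¹

theorem conjTranspose_mul_partner_eq_zero (hQ : A * Q = Q) (X : Matrix m ι ℍ[ℝ]) (b : ι → ℝ) :
    Qᴴ * partner A X b = 0 := by
  rw [partner, ← Matrix.mul_assoc, conjTranspose_mul_sub_eq_zero hQ, Matrix.zero_mul]

theorem conjTranspose_mul_eq_add_partner (A : Matrix m m ℍ[ℝ]) (X : Matrix m ι ℍ[ℝ])
    (hb : ∀ t, b t ≠ 0) : Aᴴ * X = X + partner A X b * realDiagonal b := by
  rw [partner, mul_realDiagonal_inv_cancel_right _ hb, add_sub_cancel]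

theorem IsEigenframe.mul_partner (h : IsEigenframe (A * Aᴴ) X (1 + b ^ 2)) (hX : A * X = X)
    (hb : ∀ t, b t ≠ 0) : A * partner A X b = X * realDiagonal b := by
  have hbb : (1 + b ^ 2 - 1) * b⁻¹ = b := by
    ext t
    simp [sq, hb t]
  rw [partner, ← Matrix.mul_assoc, h.mul_sub hX, Matrix.mul_assoc, realDiagonal_mul_realDiagonal,
    hbb]

theorem IsEigenframe.partner_orthonormal (h : IsEigenframe (A * Aᴴ) X (1 + b ^ 2))
    (hX : A * X = X) (hb : ∀ t, b t ≠ 0) : (partner A X b)ᴴ * partner A X b = 1 := by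
  have hbb : b⁻¹ * ((1 + b ^ 2 - 1) * b⁻¹) = 1 := by
    ext t
    simp [sq, hb t]
  calc (partner A X b)ᴴ * partner A X b
      = realDiagonal b⁻¹ * ((Aᴴ * X - X)ᴴ * (Aᴴ * X - X) * realDiagonal b⁻¹) := by
        simp only [partner, conjTranspose_mul _ (realDiagonal _), realDiagonal_conjTranspose,
          Matrix.mul_assoc]
    _ = 1 := by
        rw [h.gram_sub hX, realDiagonal_mul_realDiagonal, realDiagonal_mul_realDiagonal, hbb,
          realDiagonal_one]

variable [Fintype κ] [DecidableEq κ]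

/-- The direct sum of the blocks `[[1, b t], [0, 0]]` and of `[1]` for each index in `κ`, with the
basis ordered so that the first basis vectors of all `2 × 2` blocks precede the second ones. -/
def nonzeroBlocks {ι : Type*} [DecidableEq ι] (κ : Type*) [DecidableEq κ] (b : ι → ℝ) :
    Matrix ((ι ⊕ ι) ⊕ κ) ((ι ⊕ ι) ⊕ κ) ℍ[ℝ] :=
  fromBlocks (fromBlocks 1 (realDiagonal b) 0 0) 0 0 1

theorem nonzeroBlocks_mul_conjTranspose (κ : Type*) [Fintype κ] [DecidableEq κ] (b : ι → ℝ) :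
    nonzeroBlocks κ b * (nonzeroBlocks κ b)ᴴ =
      realDiagonal (Sum.elim (Sum.elim (1 + b ^ 2) 0) 1) := by
  have hadd : (1 : Matrix ι ι ℍ[ℝ]) + realDiagonal (b * b) = realDiagonal (1 + b ^ 2) := by
    rw [← realDiagonal_one, ← realDiagonal_add, sq]
  simp only [nonzeroBlocks, fromBlocks_conjTranspose, fromBlocks_multiply, conjTranspose_one,
    conjTranspose_zero, realDiagonal_conjTranspose, realDiagonal_mul_realDiagonal, Matrix.mul_one,
    Matrix.mul_zero, Matrix.zero_mul, add_zero, zero_add, hadd]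
  rw [← fromBlocks_realDiagonal, ← fromBlocks_realDiagonal, realDiagonal_zero, realDiagonal_one]

/-- The basis formed by the columns of `X`, their partners and the columns of `Q`, in which `A`
acts as `nonzeroBlocks`. -/
def blockFrame (A : Matrix m m ℍ[ℝ]) (X : Matrix m ι ℍ[ℝ]) (Q : Matrix m κ ℍ[ℝ]) (b : ι → ℝ) :
    Matrix m ((ι ⊕ ι) ⊕ κ) ℍ[ℝ] :=
  fromCols (fromCols X (partner A X b)) Q

theorem IsEigenframe.blockFrame_orthonormal
    (h : IsEigenframe (A * Aᴴ) (fromCols X Q) (Sum.elim (1 + b ^ 2) 1)) (hX : A * X = X)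
    (hQ : A * Q = Q) (hb : ∀ t, b t ≠ 0) : (blockFrame A X Q b)ᴴ * blockFrame A X Q b = 1 := by
  obtain ⟨hXe, hQe, hXQ⟩ := isEigenframe_fromCols_iff.mp h
  have hYQ : (partner A X b)ᴴ * Q = 0 :=
    conjTranspose_mul_eq_zero_comm.mp (conjTranspose_mul_partner_eq_zero hQ X b)
  exact fromCols_conjTranspose_mul_self_eq_one_iff.mpr
    ⟨fromCols_conjTranspose_mul_self_eq_one_iff.mpr
      ⟨hXe.orthonormal, hXe.partner_orthonormal hX hb, conjTranspose_mul_partner_eq_zero hX X b⟩,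
      hQe.orthonormal, fromCols_conjTranspose_mul_eq_zero_iff.mpr ⟨hXQ, hYQ⟩⟩

theorem IsEigenframe.mul_blockFrame (h : IsEigenframe (A * Aᴴ) X (1 + b ^ 2)) (hX : A * X = X)
    (hQ : A * Q = Q) (hb : ∀ t, b t ≠ 0) :
    A * blockFrame A X Q b = blockFrame A X Q b * nonzeroBlocks κ b := by
  simp only [blockFrame, nonzeroBlocks, mul_fromCols, fromCols_mul_fromBlocks, hX, hQ,
    h.mul_partner hX hb, Matrix.mul_one, Matrix.mul_zero, add_zero, zero_add]

theorem conjTranspose_mul_eq_blockFrame_mul (X : Matrix m ι ℍ[ℝ]) (hQ : Aᴴ * Q = Q)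
    (hb : ∀ t, b t ≠ 0) :
    Aᴴ * fromCols X Q =
      blockFrame A X Q b * (fromBlocks (fromRows 1 (realDiagonal b)) 0 0 1 :
        Matrix ((ι ⊕ ι) ⊕ κ) (ι ⊕ κ) ℍ[ℝ]) := by
  rw [blockFrame, mul_fromCols, fromCols_mul_fromBlocks, fromCols_mul_fromRows, hQ,
    conjTranspose_mul_eq_add_partner A X hb]
  simp only [Matrix.mul_one, Matrix.mul_zero, add_zero, zero_add]

theorem exists_equiv_eq_sumElim {ι : Type*} [Finite ι] {d : ι → ℝ}
    (hd : ∀ i, d i = 0 ∨ 1 ≤ d i) :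
    ∃ (p q s : ℕ) (b : Fin p → ℝ) (e : (Fin p ⊕ Fin q) ⊕ Fin s ≃ ι), (∀ t, 0 < b t) ∧
      d ∘ e = Sum.elim (Sum.elim (1 + b ^ 2) (1 : Fin q → ℝ)) (0 : Fin s → ℝ) := by
  let T := (Finite.equivFin {i // 1 < d i}).symm
  let S := (Finite.equivFin {i // d i = 1}).symm
  let Z := (Finite.equivFin {i // d i = 0}).symm
  let f := Sum.elim (Sum.elim (fun t => (T t : ι)) fun t => (S t : ι)) fun t => (Z t : ι)
  have injective : f.Injective := by
    refine ((Subtype.val_injective.comp T.injective).sumElim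
      (Subtype.val_injective.comp S.injective) fun t s h => ?_).sumElim
      (Subtype.val_injective.comp Z.injective) ?_
    · exact (T t).2.ne' ((congrArg d h).trans (S s).2)
    · rintro (t | s) z h
      · exact (zero_lt_one.trans (T t).2).ne' ((congrArg d h).trans (Z z).2)
      · exact one_ne_zero ((S s).2.symm.trans ((congrArg d h).trans (Z z).2))
  have surjective : f.Surjective := fun i => by
    rcases hd i with h0 | h1
    · exact ⟨Sum.inr (Z.symm ⟨i, h0⟩), congrArg Subtype.val (Z.apply_symm_apply _)⟩
    · rcases h1.eq_or_lt with h1 | h1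
      · exact ⟨Sum.inl (Sum.inr (S.symm ⟨i, h1.symm⟩)),
          congrArg Subtype.val (S.apply_symm_apply _)⟩
      · exact ⟨Sum.inl (Sum.inl (T.symm ⟨i, h1⟩)), congrArg Subtype.val (T.apply_symm_apply _)⟩
  refine ⟨_, _, _, fun t => √(d (T t) - 1), Equiv.ofBijective f ⟨injective, surjective⟩,
    fun t => Real.sqrt_pos.mpr (sub_pos.mpr (T t).2), ?_⟩
  ext1 ((t | s) | z)
  · change d (T t) = 1 + √(d (T t) - 1) ^ 2
    rw [Real.sq_sqrt (sub_pos.mpr (T t).2).le, add_sub_cancel]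
  · exact (S s).2
  · exact (Z z).2

theorem exists_eigenframe_of_idempotent [DecidableEq m] (hA : A * A = A) :
    ∃ (p q s : ℕ) (b : Fin p → ℝ) (X : Matrix m (Fin p) ℍ[ℝ]) (Q : Matrix m (Fin q) ℍ[ℝ])
      (N : Matrix m (Fin s) ℍ[ℝ]), (∀ t, 0 < b t) ∧
      IsEigenframe (A * Aᴴ) (fromCols (fromCols X Q) N)
        (Sum.elim (Sum.elim (1 + b ^ 2) 1) 0) ∧
      fromCols (fromCols X Q) N * (fromCols (fromCols X Q) N)ᴴ = 1 := by
  obtain ⟨U, d, hU, -⟩ := exists_isEigenframe_orthogonal (isHermitian_mul_conjTranspose_self A)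
    (X := (0 : Matrix m (Fin 0) ℍ[ℝ])) (C := 0) (Subsingleton.elim _ _) (Fintype.card m)
    (by rw [Fintype.card_fin, zero_add])
  obtain ⟨p, q, s, b, e, hb, hde⟩ := exists_equiv_eq_sumElim (hU.eq_zero_or_one_le hA)
  have hV := hU.submatrix e.injective
  rw [hde] at hV
  have hV' := (mul_eq_one_comm_of_equiv (e.trans (Fintype.equivFin m).symm)).mp hV.orthonormal
  refine ⟨p, q, s, b, (U.submatrix id e).toCols₁.toCols₁, (U.submatrix id e).toCols₁.toCols₂,
    (U.submatrix id e).toCols₂, hb, ?_⟩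
  rw [fromCols_toCols, fromCols_toCols]
  exact ⟨hV, hV'⟩

theorem exists_orthonormal_nonzeroBlocks (hA : A * A = A) :
    ∃ (p q : ℕ) (b : Fin p → ℝ) (F : Matrix m ((Fin p ⊕ Fin p) ⊕ Fin q) ℍ[ℝ]), (∀ t, 0 < b t) ∧
      Fᴴ * F = 1 ∧ A * F = F * nonzeroBlocks (Fin q) b ∧
      ∃ G : Matrix ((Fin p ⊕ Fin p) ⊕ Fin q) m ℍ[ℝ], Aᴴ = F * G := by
  classical
  obtain ⟨p, q, s, b, X, Q, N, hb, hV, hV'⟩ := exists_eigenframe_of_idempotent hA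
  obtain ⟨hXQ, hN, -⟩ := isEigenframe_fromCols_iff.mp hV
  obtain ⟨hX, hQ, -⟩ := isEigenframe_fromCols_iff.mp hXQ
  have hb0 : ∀ t, b t ≠ 0 := fun t => (hb t).ne'
  have hAX : A * X = X := hX.mul_eq_self_of_idempotent hA fun t => by
    simp only [Pi.add_apply, Pi.one_apply, Pi.pow_apply]
    positivity
  have hAQ : A * Q = Q := hQ.mul_eq_self_of_idempotent hA fun _ => one_ne_zero
  obtain ⟨G, hG⟩ : ∃ G : Matrix ((Fin p ⊕ Fin p) ⊕ Fin q) ((Fin p ⊕ Fin q) ⊕ Fin s) ℍ[ℝ],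
      Aᴴ * fromCols (fromCols X Q) N = blockFrame A X Q b * G :=
    ⟨fromCols (fromBlocks (fromRows 1 (realDiagonal b)) 0 0 1) 0, by
      rw [mul_fromCols, conjTranspose_mul_eq_blockFrame_mul X (hQ.conjTranspose_mul_eq_self hA)
        hb0, hN.conjTranspose_mul_eq_zero, mul_fromCols, Matrix.mul_zero]⟩
  have range_le : Aᴴ = blockFrame A X Q b * (G * (fromCols (fromCols X Q) N)ᴴ) := by
    rw [← Matrix.mul_assoc, ← hG, Matrix.mul_assoc, hV', Matrix.mul_one]
  exact ⟨p, q, b, blockFrame A X Q b, hb, hXQ.blockFrame_orthonormal hAX hAQ hb0,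
    hX.mul_blockFrame hAX hAQ hb0, _, range_le⟩

end Idempotent

section UnitarySimilarity

variable {m ι : Type*} [Fintype m] [DecidableEq m] {A B C : Matrix m m ℍ[ℝ]}

theorem IsUnitaryM.conjTranspose {U : Matrix m m ℍ[ℝ]} (hU : IsUnitaryM U) : IsUnitaryM Uᴴ := by
  rw [IsUnitaryM, conjTranspose_conjTranspose]
  exact mul_eq_one_comm.mp hU

theorem UnitarilySimilar.symm (h : UnitarilySimilar A B) : UnitarilySimilar B A := by
  obtain ⟨U, hU, rfl⟩ := h
  have hU' : U * Uᴴ = 1 := mul_eq_one_comm.mp hU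
  refine ⟨Uᴴ, hU.conjTranspose, ?_⟩
  calc B = U * Uᴴ * B * (U * Uᴴ) := by rw [hU', Matrix.one_mul, Matrix.mul_one]
    _ = Uᴴᴴ * (Uᴴ * B * U) * Uᴴ := by simp only [conjTranspose_conjTranspose, Matrix.mul_assoc]

theorem UnitarilySimilar.trans (h : UnitarilySimilar A B) (h' : UnitarilySimilar B C) :
    UnitarilySimilar A C := by
  obtain ⟨U, hU, rfl⟩ := h
  obtain ⟨V, hV, rfl⟩ := h'
  refine ⟨V * U, ?_, by simp only [conjTranspose_mul, Matrix.mul_assoc]⟩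
  rw [IsUnitaryM] at hU hV ⊢
  rw [conjTranspose_mul, Matrix.mul_assoc, ← Matrix.mul_assoc Vᴴ, hV, Matrix.one_mul, hU]

theorem UnitarilySimilar.mul_conjTranspose_self (h : UnitarilySimilar A B) :
    UnitarilySimilar (A * Aᴴ) (B * Bᴴ) := by
  obtain ⟨U, hU, rfl⟩ := h
  have hU' : U * Uᴴ = 1 := mul_eq_one_comm.mp hU
  refine ⟨U, hU, ?_⟩
  calc Uᴴ * B * U * (Uᴴ * B * U)ᴴ = Uᴴ * B * (U * Uᴴ) * Bᴴ * U := by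
        simp only [conjTranspose_mul, conjTranspose_conjTranspose, Matrix.mul_assoc]
    _ = Uᴴ * (B * Bᴴ) * U := by rw [hU', Matrix.mul_one, Matrix.mul_assoc Uᴴ]

theorem UnitarilySimilar.of_mul_eq_mul [Fintype ι] [DecidableEq ι] {D : Matrix ι ι ℍ[ℝ]}
    {V : Matrix m ι ℍ[ℝ]} (e : ι ≃ m) (hV : Vᴴ * V = 1) (hAV : A * V = V * D) :
    UnitarilySimilar A (D.submatrix e.symm e.symm) := by
  have hV' : V * Vᴴ = 1 := (mul_eq_one_comm_of_equiv e).mp hV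
  refine ⟨Vᴴ.submatrix e.symm id, ?_, ?_⟩
  · rw [IsUnitaryM, conjTranspose_submatrix, conjTranspose_conjTranspose,
      submatrix_mul_equiv, hV', submatrix_id_id]
  · rw [conjTranspose_submatrix, conjTranspose_conjTranspose, submatrix_mul_equiv,
      submatrix_mul_equiv, submatrix_id_id, ← hAV, Matrix.mul_assoc, hV', Matrix.mul_one]

theorem UnitarilySimilar.re_trace_eq (h : UnitarilySimilar A B) : A.trace.re = B.trace.re := by
  obtain ⟨U, hU, rfl⟩ := h
  rw [quaternion_re_trace_mul_comm, ← Matrix.mul_assoc, mul_eq_one_comm.mp hU, Matrix.one_mul]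

theorem UnitarilySimilar.realDiagonal_comp {d c : m → ℝ}
    (h : UnitarilySimilar (realDiagonal d) (realDiagonal c)) (f : ℝ → ℝ) :
    UnitarilySimilar (realDiagonal (f ∘ d)) (realDiagonal (f ∘ c)) := by
  obtain ⟨U, hU, hdc⟩ := h
  have intertwines : U * realDiagonal d = realDiagonal c * U := by
    rw [hdc, ← Matrix.mul_assoc, ← Matrix.mul_assoc, mul_eq_one_comm.mp hU, Matrix.one_mul]
  refine ⟨U, hU, ?_⟩
  rw [Matrix.mul_assoc, ← mul_realDiagonal_comp_eq intertwines f, ← Matrix.mul_assoc, hU,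
    Matrix.one_mul]

theorem UnitarilySimilar.sum_comp_eq {d c : m → ℝ}
    (h : UnitarilySimilar (realDiagonal d) (realDiagonal c)) (f : ℝ → ℝ) :
    ∑ i, f (d i) = ∑ i, f (c i) := by
  simpa only [re_trace_realDiagonal, Function.comp_apply] using (h.realDiagonal_comp f).re_trace_eq

end UnitarySimilarity

section CanonicalForm

variable {m : Type*} {A : Matrix m m ℍ[ℝ]} {p q r : ℕ} {b : Fin p → ℝ}

/-- The reordering of the basis of `projCanon p q r b` that lists the first basis vectors of all
`2 × 2` blocks, then the second ones, as in `nonzeroBlocks`. -/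
def gatherEquiv (p q r : ℕ) :
    (Fin 2 × Fin p) ⊕ (Fin q ⊕ Fin r) ≃ ((Fin p ⊕ Fin p) ⊕ Fin q) ⊕ Fin r :=
  (Equiv.sumCongr ((finTwoEquiv.prodCongr (.refl _)).trans (Equiv.boolProdEquivSum _))
    (.refl _)).trans (Equiv.sumAssoc _ _ _).symm

theorem projCanon_eq_submatrix (p q r : ℕ) (b : Fin p → ℝ) :
    projCanon p q r b =
      (fromBlocks (nonzeroBlocks (Fin q) b) 0 0 0).submatrix (gatherEquiv p q r)
        (gatherEquiv p q r) := by
  ext1 (⟨s, t⟩ | i | i) (⟨s', t'⟩ | j | j)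
  · fin_cases s <;> fin_cases s' <;>
      simp [projCanon, nonzeroBlocks, gatherEquiv, finTwoEquiv, Equiv.boolProdEquivSum,
        realDiagonal, blockDiagonal_apply, diagonal_apply, one_apply]
  all_goals simp [projCanon, nonzeroBlocks, gatherEquiv, one_apply]

theorem projCanon_submatrix (e : (Fin 2 × Fin p) ⊕ (Fin q ⊕ Fin r) ≃ m) :
    (projCanon p q r b).submatrix e.symm e.symm =
      (fromBlocks (nonzeroBlocks (Fin q) b) 0 0 0).submatrix
        (e.symm.trans (gatherEquiv p q r)) (e.symm.trans (gatherEquiv p q r)) := by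
  rw [projCanon_eq_submatrix, submatrix_submatrix]
  rfl

variable [Fintype m]

/-- The eigenvalues of `C * Cᴴ` for the canonical form `C`, in the order of `gatherEquiv`. -/
def canonEigenvalues (q r : ℕ) (b : Fin p → ℝ) : ((Fin p ⊕ Fin p) ⊕ Fin q) ⊕ Fin r → ℝ :=
  Sum.elim (Sum.elim (Sum.elim (1 + b ^ 2) 0) 1) 0

theorem sum_comp_canonEigenvalues (e : (Fin 2 × Fin p) ⊕ (Fin q ⊕ Fin r) ≃ m) (f : ℝ → ℝ) :
    ∑ i, f ((canonEigenvalues q r b ∘ e.symm.trans (gatherEquiv p q r)) i) =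
      ∑ t, f (1 + b t ^ 2) + p * f 0 + q * f 1 + r * f 0 := by
  refine (Equiv.sum_comp _ fun j => f (canonEigenvalues q r b j)).trans ?_
  simp [canonEigenvalues]

variable [DecidableEq m]

theorem exists_unitarilySimilar_projCanon (hA : A * A = A) :
    ∃ (p q r : ℕ) (b : Fin p → ℝ) (e : (Fin 2 × Fin p) ⊕ (Fin q ⊕ Fin r) ≃ m),
      (∀ t, 0 < b t) ∧ UnitarilySimilar A ((projCanon p q r b).submatrix e.symm e.symm) := by
  obtain ⟨p, q, b, F, hb, hF, hAF, G, hG⟩ := exists_orthonormal_nonzeroBlocks hA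
  obtain ⟨r, hr⟩ := Nat.exists_eq_add_of_le (card_le_card_of_mul_eq_one hF)
  obtain ⟨W, _, hW, hFW⟩ := exists_isEigenframe_orthogonal (H := 0) isHermitian_zero (X := F)
    (C := 0) (by rw [Matrix.zero_mul, Matrix.mul_zero]) r hr.ge
  have hAW : A * W = 0 := by
    rw [← conjTranspose_conjTranspose A, hG, conjTranspose_mul, Matrix.mul_assoc, hFW,
      Matrix.mul_zero]
  have hV := fromCols_conjTranspose_mul_self_eq_one_iff.mpr ⟨hF, hW.orthonormal, hFW⟩
  have hAV : A * fromCols F W =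
      fromCols F W *
        fromBlocks (nonzeroBlocks (Fin q) b) 0 0 (0 : Matrix (Fin r) (Fin r) ℍ[ℝ]) := by
    simp only [mul_fromCols, fromCols_mul_fromBlocks, hAF, hAW, Matrix.mul_zero, add_zero]
  have hcard : Fintype.card (((Fin p ⊕ Fin p) ⊕ Fin q) ⊕ Fin r) = Fintype.card m := by
    rw [hr, Fintype.card_sum, Fintype.card_fin]
  let f := Fintype.equivOfCardEq hcard
  have reindex : ((gatherEquiv p q r).trans f).symm.trans (gatherEquiv p q r) = f.symm := by
    ext1 i
    simp only [Equiv.symm_trans_apply, Equiv.trans_apply, Equiv.apply_symm_apply]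
  refine ⟨p, q, r, b, (gatherEquiv p q r).trans f, hb, ?_⟩
  rw [projCanon_submatrix, reindex]
  exact UnitarilySimilar.of_mul_eq_mul f hV hAV

theorem projCanon_submatrix_mul_conjTranspose (e : (Fin 2 × Fin p) ⊕ (Fin q ⊕ Fin r) ≃ m) :
    (projCanon p q r b).submatrix e.symm e.symm *
        ((projCanon p q r b).submatrix e.symm e.symm)ᴴ =
      realDiagonal (canonEigenvalues q r b ∘ e.symm.trans (gatherEquiv p q r)) := by
  rw [projCanon_submatrix, conjTranspose_submatrix, submatrix_mul_equiv,
    ← realDiagonal_submatrix _ (Equiv.injective _), canonEigenvalues, ← fromBlocks_realDiagonal,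
    ← nonzeroBlocks_mul_conjTranspose, fromBlocks_conjTranspose, fromBlocks_multiply]
  simp only [conjTranspose_zero, Matrix.mul_zero, Matrix.zero_mul, add_zero, realDiagonal_zero]

variable {p' q' r' : ℕ} {b' : Fin p' → ℝ} {e : (Fin 2 × Fin p) ⊕ (Fin q ⊕ Fin r) ≃ m}
  {e' : (Fin 2 × Fin p') ⊕ (Fin q' ⊕ Fin r') ≃ m}

theorem sum_eq_of_unitarilySimilar_projCanon
    (h : UnitarilySimilar A ((projCanon p q r b).submatrix e.symm e.symm))
    (h' : UnitarilySimilar A ((projCanon p' q' r' b').submatrix e'.symm e'.symm)) (f : ℝ → ℝ) :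
    ∑ t, f (1 + b t ^ 2) + p * f 0 + q * f 1 + r * f 0 =
      ∑ t, f (1 + b' t ^ 2) + p' * f 0 + q' * f 1 + r' * f 0 := by
  have similar := (h.symm.trans h').mul_conjTranspose_self
  rw [projCanon_submatrix_mul_conjTranspose, projCanon_submatrix_mul_conjTranspose] at similar
  rw [← sum_comp_canonEigenvalues e, ← sum_comp_canonEigenvalues e', similar.sum_comp_eq]

-- An arbitrary function `g` of the `b t` is read off the eigenvalues by `y ↦ g √(y - 1)`, cut off
-- at `y ≤ 1`.
theorem sum_comp_eq_of_unitarilySimilar_projCanon (hb : ∀ t, 0 < b t) (hb' : ∀ t, 0 < b' t)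
    (h : UnitarilySimilar A ((projCanon p q r b).submatrix e.symm e.symm))
    (h' : UnitarilySimilar A ((projCanon p' q' r' b').submatrix e'.symm e'.symm)) (g : ℝ → ℝ) :
    ∑ t, g (b t) = ∑ t, g (b' t) := by
  have cutoff : ∀ c : ℝ, 0 < c → (if 1 < 1 + c ^ 2 then g √(1 + c ^ 2 - 1) else 0) = g c :=
    fun c hc => by
      rw [if_pos (lt_add_of_pos_right _ (by positivity)), add_sub_cancel_left, Real.sqrt_sq hc.le]
  have hsum := sum_eq_of_unitarilySimilar_projCanon h h' fun y => if 1 < y then g √(y - 1) else 0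
  simpa only [cutoff _ (hb _), cutoff _ (hb' _), lt_irrefl, if_false, not_lt.mpr zero_le_one,
    mul_zero, add_zero] using hsum

theorem projCanon_unique (hb : ∀ t, 0 < b t) (hb' : ∀ t, 0 < b' t)
    (h : UnitarilySimilar A ((projCanon p q r b).submatrix e.symm e.symm))
    (h' : UnitarilySimilar A ((projCanon p' q' r' b').submatrix e'.symm e'.symm)) :
    p = p' ∧ q = q' ∧ r = r' ∧ ∃ σ : Fin p ≃ Fin p', ∀ t, b t = b' (σ t) := by
  obtain ⟨σ, hσ⟩ :=
    exists_equiv_of_sum_comp_eq (sum_comp_eq_of_unitarilySimilar_projCanon hb hb' h h')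
  have hp : p = p' := by simpa only [Fintype.card_fin] using Fintype.card_congr σ
  have hq : q = q' := by
    simpa [(hb _).ne', (hb' _).ne'] using
      sum_eq_of_unitarilySimilar_projCanon h h' fun y => if y = 1 then 1 else 0
  have hr : r = r' := by
    have eigenvalue_ne_zero : ∀ c : ℝ, 1 + c ^ 2 ≠ 0 := fun c => by positivity
    simpa [eigenvalue_ne_zero, hp] using
      sum_eq_of_unitarilySimilar_projCanon h h' fun y => if y = 0 then 1 else 0
  exact ⟨hp, hq, hr, σ, hσ⟩

end CanonicalForm

/-- **Theorem 3.1(a).** Every quaternion idempotent matrix is unitarily similar to a direct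
sum of blocks `[[1,b],[0,0]]` (`b > 0`), `[1]`, and `[0]`, and this direct sum is uniquely
determined up to permutation of the summands. -/
theorem idempotent_canonical_form {n : ℕ} (A : Matrix (Fin n) (Fin n) ℍ[ℝ])
    (hA : A * A = A) :
    ∃ (p q r : ℕ) (b : Fin p → ℝ) (e : ((Fin 2 × Fin p) ⊕ (Fin q ⊕ Fin r)) ≃ Fin n),
      (∀ t, 0 < b t) ∧
      UnitarilySimilar A ((projCanon p q r b).submatrix e.symm e.symm) ∧
      ∀ (p' q' r' : ℕ) (b' : Fin p' → ℝ)
        (e' : ((Fin 2 × Fin p') ⊕ (Fin q' ⊕ Fin r')) ≃ Fin n),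
        (∀ t, 0 < b' t) →
        UnitarilySimilar A ((projCanon p' q' r' b').submatrix e'.symm e'.symm) →
        p = p' ∧ q = q' ∧ r = r' ∧ ∃ σ : Fin p ≃ Fin p', ∀ t, b t = b' (σ t) := by
  obtain ⟨p, q, r, b, e, hb, h⟩ := exists_unitarilySimilar_projCanon hA
  exact ⟨p, q, r, b, e, hb, h, fun p' q' r' b' e' hb' h' => projCanon_unique hb hb' h h'⟩
end
end

section
/- Let M be an n×n quaternion matrix that is nonderogatory, i.e., M is similar over ℍ to a direct sum J_{n₁}(λ₁) ⊕ ⋯ ⊕ J_{n_k}(λ_k) of Jordan blocks whose standard eigenvalues λ₁,…,λ_k are pairwise distinct complex numbers with nonnegative imaginary parts. Then M is unitarily similar to an upper triangular quaternion matrix A = (a_{lr}) whose diagonal entries λ_l = a_{ll} are complex numbers with nonnegative imaginary parts satisfying λ₁ ⪰ λ₂ ⪰ ⋯ ⪰ λ_n, and such that whenever λ_l = λ_{l+1}, the superdiagonal entry a_{l,l+1} does not lie in ℂj = {zj : z ∈ ℂ}. -/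
open Matrix
open scoped Quaternion

noncomputable section

/-- The embedding of `ℂ = ℝ + ℝi` into the quaternions. -/
def cq (z : ℂ) : ℍ[ℝ] := ⟨z.re, z.im, 0, 0⟩

/-- The quaternion unit `j`. -/
def jq : ℍ[ℝ] := ⟨0, 0, 1, 0⟩

/-- The ordering `⪰` on complex numbers: `a+bi ⪰ c+di` iff (`a ≥ c` and `b = d`) or `b > d`. -/
def csucceq (z w : ℂ) : Prop := (w.re ≤ z.re ∧ z.im = w.im) ∨ w.im < z.im

/-- The triangular form (2.1): `A` is upper triangular, its diagonal entries are complex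
with nonnegative imaginary parts, `⪰`-nonincreasing down the diagonal, and whenever two
consecutive diagonal entries coincide the corresponding superdiagonal entry is not in
`ℂj`. -/
def TriCanonForm {n : ℕ} (A : Matrix (Fin n) (Fin n) ℍ[ℝ]) (lam : Fin n → ℂ) : Prop :=
  (∀ r c : Fin n, c < r → A r c = 0) ∧
  (∀ l, A l l = cq (lam l)) ∧
  (∀ l, 0 ≤ (lam l).im) ∧
  (∀ (l : ℕ) (h : l + 1 < n), csucceq (lam ⟨l, Nat.lt_of_succ_lt h⟩) (lam ⟨l + 1, h⟩)) ∧
  (∀ (l : ℕ) (h : l + 1 < n), lam ⟨l, Nat.lt_of_succ_lt h⟩ = lam ⟨l + 1, h⟩ →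
      ¬∃ z : ℂ, A ⟨l, Nat.lt_of_succ_lt h⟩ ⟨l + 1, h⟩ = cq z * jq)

/-- `A` and `B` are similar over `ℍ`: `A = S⁻¹ * B * S` for some invertible `S`. -/
def SimilarQ {m : Type*} [Fintype m] [DecidableEq m] (A B : Matrix m m ℍ[ℝ]) : Prop :=
  ∃ S : (Matrix m m ℍ[ℝ])ˣ, A = (S⁻¹).val * B * S.val

/-- The direct sum of Jordan blocks `J_{m t}(μ t)` with complex eigenvalues, indexed by
the sigma type `Σ t, Fin (m t)`. -/
def jordanC {k : ℕ} (m : Fin k → ℕ) (mu : Fin k → ℂ) :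
    Matrix (Σ t : Fin k, Fin (m t)) (Σ t : Fin k, Fin (m t)) ℍ[ℝ] :=
  fun x y =>
    if x.1 = y.1 then
      if (x.2 : ℕ) = (y.2 : ℕ) then cq (mu x.1)
      else if (y.2 : ℕ) = (x.2 : ℕ) + 1 then 1 else 0
    else 0

/-- `M` is nonderogatory: it is similar over `ℍ` to a direct sum of Jordan blocks whose
standard eigenvalues (complex with nonnegative imaginary parts) are pairwise distinct. -/
def Nonderogatory {n : ℕ} (M : Matrix (Fin n) (Fin n) ℍ[ℝ]) : Prop :=
  ∃ (k : ℕ) (m : Fin k → ℕ) (mu : Fin k → ℂ) (e : Fin n ≃ Σ t : Fin k, Fin (m t)),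
    (∀ t, 0 < m t) ∧ Function.Injective mu ∧ (∀ t, 0 ≤ (mu t).im) ∧
    SimilarQ M ((jordanC m mu).submatrix e e)


/-!
If `M = S⁻¹ J S` with `J` the Jordan form, Gram–Schmidt on the columns of `S⁻¹` gives a unitary
`U = S⁻¹ T` with `T` upper triangular, so `Uᴴ M U = T⁻¹ J T`. As the diagonal of `T` is real, hence
central, this matrix has the same diagonal as `J`; moreover, where two consecutive diagonal entries
of `J` coincide, the real parts of the superdiagonal entries agree up to a positive factor, because
commutators have real part zero. The elements of `ℂj` have real part zero, so it remains to order
the Jordan basis by `⪰`, making the superdiagonal entries inside a block equal to `1`.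
-/

section Triangular

variable {ι R : Type*}

theorem isUpperTriangular_conjTranspose [LT ι] [AddMonoid R] [StarAddMonoid R] {L : Matrix ι ι R}
    (hL : L.IsLowerTriangular) : Lᴴ.IsUpperTriangular :=
  fun i j h => by rw [conjTranspose_apply, hL h, star_zero]

variable [Fintype ι] [LinearOrder ι] {X Y : Matrix ι ι R}

theorem isUpperTriangular_of_mul [NonUnitalNonAssocSemiring R] [NoZeroDivisors R]
    (hX : X.IsUpperTriangular) (hdiag : ∀ i, X i i ≠ 0) (hXY : (X * Y).IsUpperTriangular) :
    Y.IsUpperTriangular := by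
  intro r c hc
  induction r using WellFoundedGT.induction with
  | ind r ih =>
    have hrc : (X * Y) r c = X r r * Y r c := by
      rw [mul_apply, Finset.sum_eq_single r _ (by simp)]
      intro k _ hk
      rcases hk.lt_or_gt with hk | hk
      · rw [hX hk, zero_mul]
      · rw [ih k hk (hc.trans hk), mul_zero]
    rw [hXY hc] at hrc
    exact (mul_eq_zero.1 hrc.symm).resolve_left (hdiag r)

variable [NonUnitalNonAssocSemiring R]

theorem mul_apply_self_of_isUpperTriangular (hX : X.IsUpperTriangular) (hY : Y.IsUpperTriangular)
    (i : ι) : (X * Y) i i = X i i * Y i i := by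
  rw [mul_apply, Finset.sum_eq_single i _ (by simp)]
  intro k _ hk
  rcases hk.lt_or_gt with hk | hk
  · rw [hX hk, zero_mul]
  · rw [hY hk, mul_zero]

theorem mul_apply_covBy_of_isUpperTriangular (hX : X.IsUpperTriangular)
    (hY : Y.IsUpperTriangular) {i j : ι} (hij : i ⋖ j) :
    (X * Y) i j = X i i * Y i j + X i j * Y j j := by
  rw [mul_apply, Finset.sum_eq_add_of_mem i j (Finset.mem_univ _) (Finset.mem_univ _) hij.ne]
  rintro k _ ⟨hki, hkj⟩
  rcases hki.lt_or_gt with hk | hk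
  · rw [hX hk, zero_mul]
  · rw [hY ((not_lt.1 (hij.2 hk)).lt_of_ne' hkj), mul_zero]

end Triangular

section Anisotropic

variable {ι κ R : Type*} [Fintype ι] [Fintype κ]

/-- The sesquilinear form `(u, v) ↦ u G v*` on row vectors has no nonzero isotropic vector. Over
a division ring with involution this replaces positive definiteness in Gram–Schmidt without
normalization. -/
def IsAnisotropic [NonUnitalNonAssocSemiring R] [StarRing R] (G : Matrix ι ι R) : Prop :=
  ∀ v : ι → R, v ᵥ* G ⬝ᵥ star v = 0 → v = 0

theorem extend_dotProduct [NonUnitalNonAssocSemiring R] {f : κ → ι} (hf : f.Injective)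
    (v : κ → R) (a : ι → R) : Function.extend f v 0 ⬝ᵥ a = v ⬝ᵥ (a ∘ f) := by
  refine (Fintype.sum_of_injective f hf _ _ (fun i hi => ?_) fun k => ?_).symm
  · rw [Function.extend_apply' _ _ _ hi, Pi.zero_apply, zero_mul]
  · rw [hf.extend_apply, Function.comp_apply]

theorem dotProduct_extend [NonUnitalNonAssocSemiring R] {f : κ → ι} (hf : f.Injective)
    (a : ι → R) (v : κ → R) : a ⬝ᵥ Function.extend f v 0 = (a ∘ f) ⬝ᵥ v := by
  refine (Fintype.sum_of_injective f hf _ _ (fun i hi => ?_) fun k => ?_).symm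
  · rw [Function.extend_apply' _ _ _ hi, Pi.zero_apply, mul_zero]
  · rw [hf.extend_apply, Function.comp_apply]

namespace IsAnisotropic

theorem submatrix [NonUnitalNonAssocSemiring R] [StarRing R] {G : Matrix ι ι R}
    (hG : IsAnisotropic G) {f : κ → ι} (hf : f.Injective) : IsAnisotropic (G.submatrix f f) := by
  intro v hv
  have hstar : star (Function.extend f v 0) = Function.extend f (star v) 0 := by
    ext1 i
    rw [Pi.star_apply, Function.apply_extend star]
    simp [Function.comp_def, Pi.star_def, Pi.zero_def]
  have hform : (Function.extend f v 0 ᵥ* G) ∘ f = v ᵥ* G.submatrix f f :=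
    funext fun k => extend_dotProduct hf v _
  have hzero : Function.extend f v 0 = 0 :=
    hG _ (by rw [hstar, dotProduct_extend hf, hform, hv])
  ext1 k
  rw [← hf.extend_apply v 0 k, hzero, Pi.zero_apply, Pi.zero_apply]

variable [DivisionRing R] [StarRing R] {G : Matrix ι ι R}

theorem vecMul_surjective (hG : IsAnisotropic G) : Function.Surjective G.vecMul := by
  refine LinearMap.surjective_of_injective (f := G.vecMulLinear) ?_
  refine (injective_iff_map_eq_zero G.vecMulLinear).2 fun v hv => hG v ?_
  rw [Matrix.vecMulLinear_apply] at hv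
  rw [hv, zero_dotProduct]

variable [LinearOrder ι]

theorem exists_vecMul_apply_eq_zero (hG : IsAnisotropic G) (j : ι) :
    ∃ u : ι → R, u j = 1 ∧ (∀ k, j < k → u k = 0) ∧ ∀ k, k < j → (u ᵥ* G) k = 0 := by
  have hinj : Function.Injective (Subtype.val : Set.Iio j → ι) := Subtype.val_injective
  obtain ⟨v, hv⟩ := (hG.submatrix hinj).vecMul_surjective fun k => -G j k
  set w : ι → R := Function.extend (Subtype.val : Set.Iio j → ι) v 0
  have hsupp : ∀ k, ¬ k < j → w k = 0 := fun k hk =>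
    Function.extend_apply' _ _ _ fun ⟨x, hx⟩ => hk (hx ▸ x.2)
  refine ⟨Pi.single j 1 + w, ?_, fun k hk => ?_, fun k hk => ?_⟩
  · rw [Pi.add_apply, hsupp j (lt_irrefl j), Pi.single_eq_same, add_zero]
  · rw [Pi.add_apply, hsupp k hk.not_gt, Pi.single_eq_of_ne hk.ne', add_zero]
  · have hcancel : (w ᵥ* G) k = -G j k :=
      (extend_dotProduct hinj v _).trans (congrFun hv ⟨k, hk⟩)
    rw [add_vecMul, Pi.add_apply, hcancel, single_one_vecMul, row_apply, add_neg_cancel]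

theorem exists_isLowerTriangular_isDiag (hG : IsAnisotropic G) (hherm : G.IsHermitian) :
    ∃ L : Matrix ι ι R, L.IsLowerTriangular ∧ (∀ i, L i i = 1) ∧ (L * G * Lᴴ).IsDiag := by
  choose L hdiag hlower hzero using hG.exists_vecMul_apply_eq_zero
  have hL : (of L).IsLowerTriangular := fun i j h => hlower i j h
  have hLG : (of L * G).IsUpperTriangular := fun i j h => hzero i j h
  have hupper : (of L * G * (of L)ᴴ).IsUpperTriangular :=
    hLG.mul (isUpperTriangular_conjTranspose hL)
  have hherm' := isHermitian_mul_mul_conjTranspose (of L) hherm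
  refine ⟨of L, hL, hdiag, fun i j hij => ?_⟩
  rcases hij.lt_or_gt with h | h
  · rw [← hherm'.apply, hupper h, star_zero]
  · exact hupper h

end IsAnisotropic

end Anisotropic

section Quaternion

theorem re_mul_comm {R : Type*} [CommRing R] (p q : ℍ[R]) : (p * q).re = (q * p).re := by
  rw [Quaternion.re_mul, Quaternion.re_mul]
  ring

theorem re_cq_mul_jq (z : ℂ) : (cq z * jq).re = 0 := by
  rw [Quaternion.re_mul]
  simp [cq, jq]

variable {ι κ : Type*} [Fintype κ]

theorem star_dotProduct_self_eq_coe (v : κ → ℍ[ℝ]) :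
    star v ⬝ᵥ v = ((∑ k, Quaternion.normSq (v k) : ℝ) : ℍ[ℝ]) := by
  simp only [dotProduct, Pi.star_apply, Quaternion.star_mul_self]
  exact (map_sum (algebraMap ℝ ℍ[ℝ]) _ _).symm

theorem sum_normSq_pos {v : κ → ℍ[ℝ]} (hv : v ≠ 0) : 0 < ∑ k, Quaternion.normSq (v k) := by
  obtain ⟨k, hk⟩ := Function.ne_iff.1 hv
  exact Finset.sum_pos' (fun _ _ => Quaternion.normSq_nonneg)
    ⟨k, Finset.mem_univ k, Quaternion.normSq_nonneg.lt_of_ne' (Quaternion.normSq_ne_zero.2 hk)⟩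

/-- The matrices by which Gram–Schmidt acts: upper triangular with positive real diagonal. -/
def IsPosTriangular [LinearOrder ι] (T : Matrix ι ι ℍ[ℝ]) : Prop :=
  T.IsUpperTriangular ∧ ∀ i, ∃ t : ℝ, 0 < t ∧ T i i = t

theorem IsPosTriangular.apply_self_ne_zero [LinearOrder ι] {T : Matrix ι ι ℍ[ℝ]}
    (hT : IsPosTriangular T) (i : ι) : T i i ≠ 0 := by
  obtain ⟨t, ht, hTi⟩ := hT.2 i
  rw [hTi]
  exact fun h => ht.ne' (Quaternion.coe_injective h)

variable [Fintype ι]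

theorem isAnisotropic_conjTranspose_mul_self {B : Matrix κ ι ℍ[ℝ]}
    (hB : Function.Injective B.mulVec) : IsAnisotropic (Bᴴ * B) := by
  intro v hv
  set w : κ → ℍ[ℝ] := B *ᵥ star v with hw
  have hform : v ᵥ* (Bᴴ * B) ⬝ᵥ star v = star w ⬝ᵥ w := by
    rw [hw, star_mulVec, star_star, ← vecMul_vecMul, dotProduct_mulVec]
  have hw0 : w = 0 := by
    by_contra hne
    rw [hform, star_dotProduct_self_eq_coe] at hv
    exact (sum_normSq_pos hne).ne' (Quaternion.coe_injective hv)
  exact star_eq_zero.1 (hB (hw0.trans (mulVec_zero B).symm))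

theorem exists_pos_mul_diagonal_orthonormal_columns [DecidableEq ι] {C : Matrix κ ι ℍ[ℝ]}
    (hcol : ∀ i, C.col i ≠ 0) (horth : (Cᴴ * C).IsDiag) :
    ∃ s : ι → ℝ, (∀ i, 0 < s i) ∧
      (C * diagonal fun i => (s i : ℍ[ℝ]))ᴴ * (C * diagonal fun i => (s i : ℍ[ℝ])) = 1 := by
  set d : ι → ℝ := fun i => ∑ k, Quaternion.normSq (C k i)
  have hd : ∀ i, 0 < d i := fun i => sum_normSq_pos (hcol i)
  have hCC : Cᴴ * C = diagonal fun i => (d i : ℍ[ℝ]) := by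
    rw [← horth.diagonal_diag]
    exact congrArg diagonal (funext fun i => star_dotProduct_self_eq_coe (C.col i))
  have hscale : ∀ i, (√(d i))⁻¹ * (d i * (√(d i))⁻¹) = 1 := by
    intro i
    have hsqrt : √(d i) ≠ 0 := (Real.sqrt_pos.2 (hd i)).ne'
    field_simp
    exact (Real.sq_sqrt (hd i).le).symm
  refine ⟨fun i => (√(d i))⁻¹, fun i => inv_pos.2 (Real.sqrt_pos.2 (hd i)), ?_⟩
  rw [conjTranspose_mul, diagonal_conjTranspose, Matrix.mul_assoc, ← Matrix.mul_assoc Cᴴ, hCC,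
    diagonal_mul_diagonal, diagonal_mul_diagonal, ← diagonal_one]
  refine congrArg diagonal (funext fun i => ?_)
  rw [Pi.star_apply, Quaternion.star_coe, ← Quaternion.coe_mul, ← Quaternion.coe_mul, hscale,
    Quaternion.coe_one]

variable [LinearOrder ι]

theorem exists_isPosTriangular_orthonormal_columns {B : Matrix κ ι ℍ[ℝ]}
    (hB : Function.Injective B.mulVec) :
    ∃ T : Matrix ι ι ℍ[ℝ], IsPosTriangular T ∧ (B * T)ᴴ * (B * T) = 1 := by
  obtain ⟨L, hL, hL1, hdiag⟩ := (isAnisotropic_conjTranspose_mul_self hB)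
    |>.exists_isLowerTriangular_isDiag (isHermitian_conjTranspose_mul_self B)
  have hcol : ∀ i, (B * Lᴴ).col i ≠ 0 := by
    intro i h0
    have h := congrFun (hB (a₁ := Lᴴ.col i) (a₂ := 0) (h0.trans (mulVec_zero B).symm)) i
    simp [hL1] at h
  have horth : ((B * Lᴴ)ᴴ * (B * Lᴴ)).IsDiag := by
    rwa [conjTranspose_mul, conjTranspose_conjTranspose, ← Matrix.mul_assoc, Matrix.mul_assoc L]
  obtain ⟨s, hs, hone⟩ := exists_pos_mul_diagonal_orthonormal_columns hcol horth
  refine ⟨Lᴴ * diagonal fun i => (s i : ℍ[ℝ]),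
    ⟨(isUpperTriangular_conjTranspose hL).mul (blockTriangular_diagonal _),
      fun i => ⟨s i, hs i, by simp [hL1]⟩⟩, ?_⟩
  rwa [← Matrix.mul_assoc B]

namespace IsPosTriangular

variable {T A J : Matrix ι ι ℍ[ℝ]}

theorem isUpperTriangular_of_mul_eq_mul (hT : IsPosTriangular T) (hJ : J.IsUpperTriangular)
    (h : T * A = J * T) : A.IsUpperTriangular :=
  isUpperTriangular_of_mul hT.1 hT.apply_self_ne_zero (h ▸ hJ.mul hT.1)

theorem apply_self_eq_of_mul_eq_mul (hT : IsPosTriangular T) (hJ : J.IsUpperTriangular)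
    (h : T * A = J * T) (i : ι) : A i i = J i i := by
  have hA := hT.isUpperTriangular_of_mul_eq_mul hJ h
  obtain ⟨t, -, hTi⟩ := hT.2 i
  apply mul_left_cancel₀ (hT.apply_self_ne_zero i)
  calc T i i * A i i = J i i * T i i := by
        rw [← mul_apply_self_of_isUpperTriangular hT.1 hA, h,
          mul_apply_self_of_isUpperTriangular hJ hT.1]
    _ = T i i * J i i := by rw [hTi, Quaternion.coe_commutes]

theorem re_apply_covBy_pos_of_mul_eq_mul (hT : IsPosTriangular T) (hJ : J.IsUpperTriangular)
    (h : T * A = J * T) {i j : ι} (hij : i ⋖ j) (heq : J i i = J j j) (hpos : 0 < (J i j).re) :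
    0 < (A i j).re := by
  have hA := hT.isUpperTriangular_of_mul_eq_mul hJ h
  obtain ⟨t, ht, hTi⟩ := hT.2 i
  obtain ⟨s, hs, hTj⟩ := hT.2 j
  have hentry : t * A i j + T i j * J j j = J j j * T i j + J i j * s := by
    rw [← hTi, ← hTj, ← hT.apply_self_eq_of_mul_eq_mul hJ h j,
      ← mul_apply_covBy_of_isUpperTriangular hT.1 hA hij, h,
      mul_apply_covBy_of_isUpperTriangular hJ hT.1 hij, heq, hT.apply_self_eq_of_mul_eq_mul hJ h j]
  have hre : t * (A i j).re = s * (J i j).re := by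
    have := congrArg QuaternionAlgebra.re hentry
    rw [Quaternion.re_add, Quaternion.re_add, re_mul_comm (T i j), Quaternion.coe_mul_eq_smul,
      Quaternion.mul_coe_eq_smul, Quaternion.re_smul, Quaternion.re_smul, smul_eq_mul,
      smul_eq_mul] at this
    linarith
  exact pos_of_mul_pos_right (hre ▸ mul_pos hs hpos) ht.le

end IsPosTriangular

end Quaternion

section Similarity

variable {ι κ : Type*} [Fintype ι]

theorem SimilarQ.trans [DecidableEq ι] {A B C : Matrix ι ι ℍ[ℝ]} (hAB : SimilarQ A B)
    (hBC : SimilarQ B C) : SimilarQ A C := by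
  obtain ⟨S, rfl⟩ := hAB
  obtain ⟨P, rfl⟩ := hBC
  exact ⟨P * S, by simp only [_root_.mul_inv_rev, Units.val_mul, Matrix.mul_assoc]⟩

theorem similarQ_submatrix_submatrix [DecidableEq ι] (J : Matrix κ κ ℍ[ℝ]) (e f : ι ≃ κ) :
    SimilarQ (J.submatrix e e) (J.submatrix f f) := by
  classical
  have : Fintype κ := .ofEquiv ι e
  exact ⟨⟨submatrix 1 f e, submatrix 1 e f, by simp, by simp⟩, by simp⟩

variable [LinearOrder ι] {M J : Matrix ι ι ℍ[ℝ]}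

theorem SimilarQ.exists_isUnitaryM_isPosTriangular (hMJ : SimilarQ M J) :
    ∃ U T : Matrix ι ι ℍ[ℝ], IsUnitaryM U ∧ IsPosTriangular T ∧ T * (Uᴴ * M * U) = J * T := by
  obtain ⟨S, rfl⟩ := hMJ
  obtain ⟨T, hT, hU⟩ := exists_isPosTriangular_orthonormal_columns
    (mulVec_injective_of_isUnit (S⁻¹).isUnit)
  set U := (S⁻¹).val * T
  have hSU : S.val * U = T := S.mul_inv_cancel_left T
  have hUU : U * Uᴴ = 1 := mul_eq_one_comm.1 hU
  refine ⟨U, T, hU, hT, ?_⟩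
  calc T * (Uᴴ * ((S⁻¹).val * J * S.val) * U)
      = S.val * (U * Uᴴ) * (S⁻¹).val * J * (S.val * U) := by
        rw [← hSU]; simp only [Matrix.mul_assoc]
    _ = J * T := by rw [hUU, mul_one, S.mul_inv, one_mul, hSU]

theorem SimilarQ.exists_isUnitaryM_isUpperTriangular (hMJ : SimilarQ M J)
    (hJ : J.IsUpperTriangular) :
    ∃ U : Matrix ι ι ℍ[ℝ], IsUnitaryM U ∧ (Uᴴ * M * U).IsUpperTriangular ∧
      (∀ i, (Uᴴ * M * U) i i = J i i) ∧
      ∀ i j, i ⋖ j → J i i = J j j → 0 < (J i j).re → 0 < ((Uᴴ * M * U) i j).re := by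
  obtain ⟨U, T, hU, hT, h⟩ := hMJ.exists_isUnitaryM_isPosTriangular
  exact ⟨U, hU, hT.isUpperTriangular_of_mul_eq_mul hJ h, hT.apply_self_eq_of_mul_eq_mul hJ h,
    fun _ _ => hT.re_apply_covBy_pos_of_mul_eq_mul hJ h⟩

end Similarity

section JordanOrder

theorem exists_equiv_strictMono_comp {n : ℕ} {α κ : Type*} [LinearOrder κ] {g : α → κ}
    (hg : g.Injective) (e : Fin n ≃ α) : ∃ f : Fin n ≃ α, StrictMono (g ∘ f) := by
  let : LinearOrder α := LinearOrder.lift' g hg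
  let : Fintype α := .ofEquiv _ e
  let f := Fintype.orderIsoFinOfCardEq α (by simpa using (Fintype.card_congr e).symm)
  exact ⟨f.toEquiv, f.strictMono⟩

variable {k : ℕ} {m : Fin k → ℕ} {mu : Fin k → ℂ}

/-- The sort key on the Jordan basis: eigenvalues in `⪰`-decreasing order, then the position inside
the block. -/
def jordanKey (m : Fin k → ℕ) (mu : Fin k → ℂ) (x : Σ t : Fin k, Fin (m t)) : ℝ ×ₗ ℝ ×ₗ ℕ :=
  toLex (-(mu x.1).im, toLex (-(mu x.1).re, (x.2 : ℕ)))

theorem jordanKey_injective (hmu : mu.Injective) : (jordanKey m mu).Injective := by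
  rintro ⟨t, i⟩ ⟨t', i'⟩ h
  simp only [jordanKey, EmbeddingLike.apply_eq_iff_eq, Prod.mk.injEq, neg_inj] at h
  obtain rfl : t = t' := hmu (Complex.ext h.2.1 h.1)
  simpa [Fin.ext_iff] using h.2.2

theorem jordanKey_lt_jordanKey_iff {t : Fin k} {a b : Fin (m t)} :
    jordanKey m mu ⟨t, a⟩ < jordanKey m mu ⟨t, b⟩ ↔ a < b := by
  simp [jordanKey, Prod.Lex.toLex_lt_toLex]

theorem csucceq_of_jordanKey_lt {x y : Σ t : Fin k, Fin (m t)}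
    (h : jordanKey m mu x < jordanKey m mu y) : csucceq (mu x.1) (mu y.1) := by
  simp only [jordanKey, Prod.Lex.toLex_lt_toLex, neg_lt_neg_iff, neg_inj] at h
  rcases h with him | ⟨him, hre | ⟨hre, -⟩⟩
  · exact Or.inr him
  · exact Or.inl ⟨hre.le, him⟩
  · exact Or.inl ⟨hre.ge, him⟩

theorem jordanC_apply_self (x : Σ t : Fin k, Fin (m t)) : jordanC m mu x x = cq (mu x.1) := by
  simp [jordanC]

theorem jordanC_eq_zero_of_jordanKey_lt {x y : Σ t : Fin k, Fin (m t)}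
    (h : jordanKey m mu y < jordanKey m mu x) : jordanC m mu x y = 0 := by
  obtain ⟨t, a⟩ := x
  obtain ⟨t', b⟩ := y
  by_cases ht : t = t'
  · subst ht
    have hba := Fin.lt_def.1 (jordanKey_lt_jordanKey_iff.1 h)
    rw [jordanC, if_pos rfl, if_neg hba.ne', if_neg (hba.trans (Nat.lt_succ_self _)).ne]
  · rw [jordanC, if_neg ht]

variable {ι : Type*} [LinearOrder ι] {f : ι ≃ Σ t : Fin k, Fin (m t)}

theorem isUpperTriangular_jordanC_submatrix (hf : StrictMono (jordanKey m mu ∘ f)) :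
    ((jordanC m mu).submatrix f f).IsUpperTriangular :=
  fun _ _ h => jordanC_eq_zero_of_jordanKey_lt (hf h)

theorem jordanC_eq_one_of_covBy (hf : StrictMono (jordanKey m mu ∘ f)) {i j : ι} (hij : i ⋖ j)
    (h : (f i).1 = (f j).1) : jordanC m mu (f i) (f j) = 1 := by
  have hlt := hf hij.lt
  have hbetween : ∀ x, jordanKey m mu (f i) < jordanKey m mu x →
      ¬ jordanKey m mu x < jordanKey m mu (f j) := by
    intro x
    rw [← f.apply_symm_apply x]
    exact fun h₁ h₂ => hij.2 (hf.lt_iff_lt.1 h₁) (hf.lt_iff_lt.1 h₂)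
  simp only [Function.comp_apply] at hlt
  revert hlt hbetween h
  rcases f i with ⟨t, a⟩
  rcases f j with ⟨t', b⟩
  rintro rfl hlt hbetween
  have hab := Fin.lt_def.1 (jordanKey_lt_jordanKey_iff.1 hlt)
  have hsucc : (b : ℕ) = a + 1 := by
    by_contra hne
    have hab1 : (a : ℕ) + 1 < b := by omega
    exact hbetween ⟨t, ⟨a + 1, hab1.trans b.2⟩⟩
      (jordanKey_lt_jordanKey_iff.2 (Fin.lt_def.2 (Nat.lt_succ_self a)))
      (jordanKey_lt_jordanKey_iff.2 (Fin.lt_def.2 hab1))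
  rw [jordanC, if_pos rfl, if_neg hab.ne, if_pos hsucc]

end JordanOrder

/-- **Theorem 4.1(a).** Every nonderogatory quaternion matrix is unitarily similar to an
upper triangular matrix of the form (2.1). -/
theorem nonderogatory_triangular_form {n : ℕ} (M : Matrix (Fin n) (Fin n) ℍ[ℝ])
    (hM : Nonderogatory M) :
    ∃ (U : Matrix (Fin n) (Fin n) ℍ[ℝ]) (lam : Fin n → ℂ),
      IsUnitaryM U ∧ TriCanonForm (Uᴴ * M * U) lam := by
  obtain ⟨k, m, mu, e, -, hmu, him, hMJ⟩ := hM
  obtain ⟨f, hf⟩ := exists_equiv_strictMono_comp (jordanKey_injective (m := m) hmu) e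
  have hcov (l : ℕ) (h : l + 1 < n) : (⟨l, Nat.lt_of_succ_lt h⟩ : Fin n) ⋖ ⟨l + 1, h⟩ := by simp
  obtain ⟨U, hU, hupper, hdiag, hsuper⟩ :=
    (hMJ.trans (similarQ_submatrix_submatrix _ e f)).exists_isUnitaryM_isUpperTriangular
      (isUpperTriangular_jordanC_submatrix hf)
  refine ⟨U, fun i => mu (f i).1, hU, fun _ _ h => hupper h,
    fun i => (hdiag i).trans (jordanC_apply_self _), fun _ => him _,
    fun l h => csucceq_of_jordanKey_lt (hf (hcov l h).lt), fun l h heq => ?_⟩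
  rintro ⟨z, hz⟩
  have hpos := hsuper _ _ (hcov l h) (by simp only [submatrix_apply, jordanC_apply_self, heq])
    (by simp [jordanC_eq_one_of_covBy hf (hcov l h) (hmu heq)])
  rw [hz, re_cq_mul_jq] at hpos
  exact hpos.false
end
end
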